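/- arXiv:2203.03476 — 3 statements merged into one kernel-verified Lean document; each statement's English description precedes it below -/
import Mathlib

section
/- Let P be a finite ranked squared poset with rank function ℓ, let ε be a sign assignment on P, let R be a commutative ring, and let F be a covariant functor from the category associated to P to the category of R-modules. Define C^n := ⊕_{x ∈ P, ℓ(x) = n} F(x) and d^n : C^n → C^{n+1} as the sum, over all x with ℓ(x) = n and all x' with x ⋖ x', of (−1)^{ε(x,x')} F(x ≤ x'). Then d^{n+1} ∘ d^n = 0 for every n; in particular (C^*, d^*) is a cochain complex. -/
/-!
Regard `d` as a matrix indexed by the elements of `P`, whose `(x, y)` entry is `± F (x ≤ y)` when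
`x ⋖ y` and zero otherwise. By functoriality every square `x ⋖ y, y' ⋖ z` commutes before the signs
are inserted, and a sign assignment makes it anticommute. By squaredness, the chains `x ⋖ y ⋖ z`
with fixed endpoints are either absent or the two sides of a single square, so every entry of `d²`
vanishes.
-/

/-!
STATEMENT 0: For a finite ranked squared poset `P` with rank function `ℓ`, a sign
assignment `ε`, a commutative ring `R` and a functor `F` from (the category associated
to) `P` to `R`-modules, the groups `C^n = ⊕_{ℓ x = n} F x` together with the maps
`d^n = Σ_{x ⋖ x'} (-1)^{ε x x'} F(x ≤ x')` satisfy `d^{n+1} ∘ d^n = 0`.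
-/

open CategoryTheory

open scoped Classical

/-- The `n`-th cochain group: the (finite) product of the modules `F.obj x` over the
elements `x` of rank `n` (for a finite poset this agrees with the direct sum). -/
abbrev posetCochain {P : Type*} [PartialOrder P] [Fintype P] {R : Type*} [CommRing R]
    (F : P ⥤ ModuleCat R) (ℓ : P → ℕ) (n : ℕ) : Type _ :=
  Π x : {x : P // ℓ x = n}, F.obj x.val

/-- The differential `d^n : C^n → C^{n+1}`, the sum over all covering pairs `x ⋖ x'`
with `ℓ x = n` of `(-1)^{ε x x'} F(x ≤ x')`. -/
noncomputable def posetDiff {P : Type*} [PartialOrder P] [Fintype P] {R : Type*}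
    [CommRing R] (F : P ⥤ ModuleCat R) (ℓ : P → ℕ) (ε : P → P → ZMod 2) (n : ℕ)
    (c : posetCochain F ℓ n) : posetCochain F ℓ (n + 1) :=
  fun y => ∑ x : {x : P // ℓ x = n},
    if h : x.val ⋖ y.val then
      ((-1 : ℤ) ^ (ε x.val y.val).val) • (F.map (homOfLE h.le)) (c x)
    else 0

lemma neg_one_pow_val_add {M : Type*} [Monoid M] [HasDistribNeg M] (a b : ZMod 2) :
    (-1 : M) ^ (a + b).val = (-1) ^ a.val * (-1) ^ b.val := by
  rw [ZMod.val_add, ← pow_eq_pow_mod _ neg_one_sq, pow_add]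

lemma neg_one_pow_val_add_one {M : Type*} [Monoid M] [HasDistribNeg M] (a : ZMod 2) :
    (-1 : M) ^ (a + 1).val = -(-1) ^ a.val := by
  rw [neg_one_pow_val_add, ZMod.val_one, pow_one, mul_neg_one]

section SignedCoverMap

variable {P : Type*} [Preorder P] {R : Type*} [Ring R] (F : P ⥤ ModuleCat R)
  (ε : P → P → ZMod 2)

/-- The matrix entry of the differential `posetDiff` from `F x` to `F y`. It is defined for all
pairs, with value zero off the covering relation, so that entries can be summed over all of `P`. -/
noncomputable def signedCoverMap (x y : P) : F.obj x →ₗ[R] F.obj y :=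
  if h : x ⋖ y then (-1 : ℤ) ^ (ε x y).val • (F.map (homOfLE h.le)).hom else 0

variable {x y y' z : P}

lemma signedCoverMap_of_covBy (h : x ⋖ y) :
    signedCoverMap F ε x y = (-1 : ℤ) ^ (ε x y).val • (F.map (homOfLE h.le)).hom :=
  dif_pos h

lemma signedCoverMap_of_not_covBy (h : ¬x ⋖ y) : signedCoverMap F ε x y = 0 :=
  dif_neg h

lemma signedCoverMap_comp_of_covBy (hxy : x ⋖ y) (hyz : y ⋖ z) :
    signedCoverMap F ε y z ∘ₗ signedCoverMap F ε x y =
      (-1 : ℤ) ^ (ε x y + ε y z).val • (F.map (homOfLE (hxy.le.trans hyz.le))).hom := by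
  have hF : (F.map (homOfLE hyz.le)).hom ∘ₗ (F.map (homOfLE hxy.le)).hom =
      (F.map (homOfLE (hxy.le.trans hyz.le))).hom := by
    rw [← ModuleCat.hom_comp, ← F.map_comp, homOfLE_comp]
  rw [signedCoverMap_of_covBy F ε hxy, signedCoverMap_of_covBy F ε hyz, LinearMap.smul_comp,
    LinearMap.comp_smul, hF, smul_smul, neg_one_pow_val_add, mul_comm]

lemma signedCoverMap_comp_eq_zero (h : ¬(x ⋖ y ∧ y ⋖ z)) :
    signedCoverMap F ε y z ∘ₗ signedCoverMap F ε x y = 0 := by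
  rcases not_and_or.mp h with hxy | hyz
  · rw [signedCoverMap_of_not_covBy F ε hxy, LinearMap.comp_zero]
  · rw [signedCoverMap_of_not_covBy F ε hyz, LinearMap.zero_comp]

lemma signedCoverMap_comp_eq_neg (hxy : x ⋖ y) (hyz : y ⋖ z) (hxy' : x ⋖ y') (hy'z : y' ⋖ z)
    (hsign : ε x y + ε y z = ε x y' + ε y' z + 1) :
    signedCoverMap F ε y z ∘ₗ signedCoverMap F ε x y =
      -(signedCoverMap F ε y' z ∘ₗ signedCoverMap F ε x y') := by
  rw [signedCoverMap_comp_of_covBy F ε hxy hyz, signedCoverMap_comp_of_covBy F ε hxy' hy'z, hsign,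
    neg_one_pow_val_add_one, neg_smul]

lemma sum_signedCoverMap_comp_eq_zero [Fintype P]
    (hsquared : ∀ y, x ⋖ y → y ⋖ z → ∃! y', y' ≠ y ∧ x ⋖ y' ∧ y' ⋖ z)
    (hsign : ∀ y y', x ⋖ y → y ⋖ z → x ⋖ y' → y' ⋖ z → y ≠ y' →
      ε x y + ε y z = ε x y' + ε y' z + 1) :
    ∑ y, signedCoverMap F ε y z ∘ₗ signedCoverMap F ε x y = 0 := by
  by_cases hchain : ∃ y, x ⋖ y ∧ y ⋖ z
  · obtain ⟨y, hxy, hyz⟩ := hchain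
    obtain ⟨y', ⟨hne, hxy', hy'z⟩, huniq⟩ := hsquared y hxy hyz
    have hother : ∀ w, w ≠ y ∧ w ≠ y' →
        signedCoverMap F ε w z ∘ₗ signedCoverMap F ε x w = 0 := fun w ⟨hwy, hwy'⟩ ↦
      signedCoverMap_comp_eq_zero F ε fun hw ↦ hwy' (huniq w ⟨hwy, hw⟩)
    rw [Fintype.sum_eq_add y y' hne.symm hother, signedCoverMap_comp_eq_neg F ε hxy hyz hxy' hy'z
      (hsign y y' hxy hyz hxy' hy'z hne.symm), neg_add_cancel]
  · exact Finset.sum_eq_zero fun y _ ↦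
      signedCoverMap_comp_eq_zero F ε fun hy ↦ hchain ⟨y, hy⟩

end SignedCoverMap

section PosetDiff

variable {P : Type*} [PartialOrder P] [Fintype P] {R : Type*} [CommRing R]
  (F : P ⥤ ModuleCat R) (ℓ : P → ℕ) (ε : P → P → ZMod 2) {n : ℕ}

lemma posetDiff_apply (c : posetCochain F ℓ n) (y : {y : P // ℓ y = n + 1}) :
    posetDiff F ℓ ε n c y = ∑ x : {x : P // ℓ x = n}, signedCoverMap F ε x y (c x) := by
  refine Finset.sum_congr rfl fun x _ ↦ ?_
  by_cases h : x.val ⋖ y.val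
  · rw [dif_pos h, signedCoverMap_of_covBy F ε h, LinearMap.smul_apply]
  · rw [dif_neg h, signedCoverMap_of_not_covBy F ε h, LinearMap.zero_apply]

lemma posetDiff_posetDiff_apply (hrank : ∀ x y : P, x ⋖ y → ℓ y = ℓ x + 1)
    (c : posetCochain F ℓ n) (z : {z : P // ℓ z = n + 1 + 1}) :
    posetDiff F ℓ ε (n + 1) (posetDiff F ℓ ε n c) z =
      ∑ x : {x : P // ℓ x = n},
        (∑ y : P, signedCoverMap F ε y z ∘ₗ signedCoverMap F ε x y) (c x) := by
  -- Only elements of rank `n + 1` cover an element of rank `n`, so the rank restriction is vacuous.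
  have hextend (x : {x : P // ℓ x = n}) :
      ∑ y : {y : P // ℓ y = n + 1}, signedCoverMap F ε y z ∘ₗ signedCoverMap F ε x y =
        ∑ y : P, signedCoverMap F ε y z ∘ₗ signedCoverMap F ε x y := by
    refine Fintype.sum_of_injective Subtype.val Subtype.val_injective _ _ (fun y hy ↦ ?_)
      fun _ ↦ rfl
    refine signedCoverMap_comp_eq_zero F ε fun ⟨hxy, _⟩ ↦ hy ?_
    exact ⟨⟨y, by rw [hrank _ _ hxy, x.2]⟩, rfl⟩
  simp only [← hextend, posetDiff_apply, map_sum, LinearMap.sum_apply, LinearMap.comp_apply]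
  exact Finset.sum_comm

end PosetDiff

/-- If `P` is a finite poset, `ℓ` a rank function (covering relations raise `ℓ` by one),
`P` is squared (each length-two chain `z ⋖ y ⋖ x` completes to a unique square), and
`ε` is a sign assignment (its restriction to covering pairs satisfies the sign condition
on every square), then for every functor `F : P ⥤ ModuleCat R` the composite
`d^{n+1} ∘ d^n` vanishes, i.e. `(C^*, d^*)` is a cochain complex. -/
theorem posetDiff_comp_posetDiff_eq_zero {P : Type*} [PartialOrder P] [Fintype P]
    {R : Type*} [CommRing R] (F : P ⥤ ModuleCat R) (ℓ : P → ℕ)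
    (hrank : ∀ x y : P, x ⋖ y → ℓ y = ℓ x + 1)
    (hsquared : ∀ x y z : P, z ⋖ y → y ⋖ x → ∃! y' : P, y' ≠ y ∧ z ⋖ y' ∧ y' ⋖ x)
    (ε : P → P → ZMod 2)
    (hsign : ∀ x y y' z : P, x ⋖ y → y ⋖ z → x ⋖ y' → y' ⋖ z → y ≠ y' →
      ε x y + ε y z = ε x y' + ε y' z + 1)
    (n : ℕ) (c : posetCochain F ℓ n) :
    posetDiff F ℓ ε (n + 1) (posetDiff F ℓ ε n c) = 0 := by
  funext z
  rw [posetDiff_posetDiff_apply F ℓ ε hrank]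
  refine Finset.sum_eq_zero fun x _ ↦ ?_
  rw [sum_signedCoverMap_comp_eq_zero F ε (fun y ↦ hsquared z y x) fun y y' ↦ hsign x y y' z,
    LinearMap.zero_apply]
end

section
/- Let G be a finite simple graph and 𝔬 an orientation of G. The poset of matchings of G ordered by inclusion is order-isomorphic to the path poset P(G_𝔬) of multipaths of G_𝔬 ordered by inclusion if and only if 𝔬 is alternating. -/
/-!
An orientation `D` of `G` identifies sets of edges of `G` with subsets of `D`, and under this
identification the matchings of `G` are exactly the multipaths of `D` that are alternating.
The path poset is finite, so it can be isomorphic to its subposet of alternating multipaths only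
if every multipath is alternating. This happens precisely when `D` is alternating: a vertex with
an incoming edge `(u, v)` and an outgoing edge `(v, w)` yields the multipath `{(u, v), (v, w)}`,
which is not alternating.
-/

/-- The indegree of `v` in a set `S` of directed edges. -/
def indegIn {V : Type*} [DecidableEq V] (S : Finset (V × V)) (v : V) : ℕ :=
  (S.filter fun e => e.2 = v).card

/-- The outdegree of `v` in a set `S` of directed edges. -/
def outdegIn {V : Type*} [DecidableEq V] (S : Finset (V × V)) (v : V) : ℕ :=
  (S.filter fun e => e.1 = v).card

/-- `D` is an orientation of the simple graph `G`: it consists of directed versions of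
edges of `G`, and each edge `{v,w}` of `G` receives exactly one of the two directions. -/
def IsOrientation {V : Type*} (G : SimpleGraph V) (D : Finset (V × V)) : Prop :=
  (∀ p ∈ D, G.Adj p.1 p.2) ∧ ∀ v w : V, G.Adj v w → ((v, w) ∈ D ↔ (w, v) ∉ D)

/-- An orientation (given as a set `D` of directed edges) is alternating if the vertex
set splits into a part where every vertex has indegree 0 and a part where every vertex
has outdegree 0. -/
def IsAlternating {V : Type*} [DecidableEq V] (D : Finset (V × V)) : Prop :=
  ∃ A : Set V, (∀ v ∈ A, indegIn D v = 0) ∧ ∀ v ∉ A, outdegIn D v = 0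

/-- `S` contains a coherently oriented cycle: a nonempty cyclic sequence of pairwise
distinct edges of `S` in which the target of each edge is the source of the next. -/
def HasCohCycle {V : Type*} (S : Finset (V × V)) : Prop :=
  ∃ (n : ℕ) (f : ZMod (n + 1) → V × V), Function.Injective f ∧
    (∀ i, f i ∈ S) ∧ ∀ i, (f i).2 = (f (i + 1)).1

/-- `S` is a multipath of the oriented graph with edge set `D`: a subset of `D` in which
every vertex has indegree and outdegree at most 1 and which contains no coherently
oriented cycle. -/
def IsMultipathIn {V : Type*} [DecidableEq V] (D S : Finset (V × V)) : Prop :=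
  S ⊆ D ∧ (∀ v : V, indegIn S v ≤ 1) ∧ (∀ v : V, outdegIn S v ≤ 1) ∧ ¬ HasCohCycle S

/-- A matching on a simple graph `G`: a set of edges of `G` that are pairwise disjoint. -/
def IsGraphMatching {V : Type*} (G : SimpleGraph V) (m : Finset (Sym2 V)) : Prop :=
  (∀ e ∈ m, e ∈ G.edgeSet) ∧
    ∀ e ∈ m, ∀ e' ∈ m, e ≠ e' → ∀ v : V, v ∈ e → v ∉ e'

theorem imp_of_subtype_equiv {α : Type*} {p q : α → Prop} [Finite {a // q a}]
    (φ : {a // p a} ≃ {a // q a}) (hpq : ∀ a, p a → q a) {a : α} (ha : q a) : p a := by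
  have := Finite.of_equiv _ φ.symm
  have hsurj := (Finite.injective_iff_surjective_of_equiv φ).1
    (Subtype.impEmbedding p q hpq).injective
  obtain ⟨b, hb⟩ := hsurj ⟨a, ha⟩
  have hba : b.1 = a := congrArg Subtype.val hb
  exact hba ▸ b.2

theorem HasCohCycle.exists_walk {V : Type*} {S : Finset (V × V)} (hS : HasCohCycle S) :
    ∃ w : ℕ → V, ∀ n, (w n, w (n + 1)) ∈ S := by
  obtain ⟨n, f, -, hfS, hf⟩ := hS
  refine ⟨fun k => (f k).1, fun k => ?_⟩
  have hk : ((f k).1, (f ↑(k + 1)).1) = f k := by rw [Nat.cast_succ, ← hf]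
  exact hk.symm ▸ hfS k

section DirectedEdges

variable {V : Type*} [DecidableEq V] {D S T : Finset (V × V)}

theorem indegIn_eq_zero_iff {v : V} : indegIn S v = 0 ↔ ∀ u, (u, v) ∉ S := by
  simp only [indegIn, Finset.card_filter_eq_zero_iff]
  exact ⟨fun h u hu => h _ hu rfl, fun h e he hev => h e.1 (hev ▸ he)⟩

theorem outdegIn_eq_zero_iff {v : V} : outdegIn S v = 0 ↔ ∀ w, (v, w) ∉ S := by
  simp only [outdegIn, Finset.card_filter_eq_zero_iff]
  exact ⟨fun h w hw => h _ hw rfl, fun h e he hev => h e.2 (hev ▸ he)⟩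

theorem indegIn_le_one_iff {v : V} :
    indegIn S v ≤ 1 ↔ ∀ u u', (u, v) ∈ S → (u', v) ∈ S → u = u' := by
  simp only [indegIn, Finset.card_le_one, Finset.mem_filter, Prod.forall]
  grind

theorem outdegIn_le_one_iff {v : V} :
    outdegIn S v ≤ 1 ↔ ∀ w w', (v, w) ∈ S → (v, w') ∈ S → w = w' := by
  simp only [outdegIn, Finset.card_le_one, Finset.mem_filter, Prod.forall]
  grind

theorem isAlternating_iff : IsAlternating S ↔ ∀ u v w, (u, v) ∈ S → (v, w) ∉ S := by
  simp only [IsAlternating, indegIn_eq_zero_iff, outdegIn_eq_zero_iff]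
  constructor
  · rintro ⟨A, hA, hA'⟩ u v w huv
    exact hA' v (fun hv => hA v hv u huv) w
  · intro h
    refine ⟨{v | ∀ u, (u, v) ∉ S}, fun _ hv => hv, fun v hv w => ?_⟩
    obtain ⟨u, huv⟩ : ∃ u, (u, v) ∈ S := by simpa using hv
    exact h u v w huv

theorem IsAlternating.mono (hT : IsAlternating T) (hST : S ⊆ T) : IsAlternating S :=
  isAlternating_iff.2 fun u v w huv hvw => isAlternating_iff.1 hT u v w (hST huv) (hST hvw)

theorem IsAlternating.not_hasCohCycle (hS : IsAlternating S) : ¬ HasCohCycle S := by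
  intro hcycle
  obtain ⟨w, hw⟩ := hcycle.exists_walk
  exact isAlternating_iff.1 hS _ _ _ (hw 0) (hw 1)

theorem isMultipathIn_pair {u v w : V} (huv : u ≠ v) (hvw : v ≠ w) (huw : u ≠ w)
    (huvD : (u, v) ∈ D) (hvwD : (v, w) ∈ D) : IsMultipathIn D {(u, v), (v, w)} := by
  refine ⟨by simp [Finset.insert_subset_iff, huvD, hvwD], fun x => ?_, fun x => ?_, ?_⟩
  · rw [indegIn_le_one_iff]
    grind
  · rw [outdegIn_le_one_iff]
    grind
  · intro hcycle
    obtain ⟨x, hx⟩ := hcycle.exists_walk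
    -- A walk in `{(u, v), (v, w)}` has at most two steps.
    have h₀ := hx 0
    have h₁ := hx 1
    have h₂ := hx 2
    grind

instance finite_isMultipathIn : Finite {S // IsMultipathIn D S} :=
  (D.powerset.finite_toSet.subset fun _ hS => Finset.mem_powerset.2 hS.1).to_subtype

/-- The set of undirected edges of a set `S` of directed edges. It takes a multipath to the
candidate matching corresponding to it. -/
def underlyingEdges (S : Finset (V × V)) : Finset (Sym2 V) :=
  S.image fun e => s(e.1, e.2)

/-- The directed edges of `D` lying over a set `m` of undirected edges. When `D` is an orientation
of a graph containing `m`, this is `m` with each edge directed as in `D`. -/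
def orientedLift (D : Finset (V × V)) (m : Finset (Sym2 V)) : Finset (V × V) :=
  D.filter fun e => s(e.1, e.2) ∈ m

theorem underlyingEdges_mono : Monotone (underlyingEdges (V := V)) :=
  fun _ _ h => Finset.image_subset_image h

theorem orientedLift_mono : Monotone (orientedLift D) :=
  fun _ _ h => Finset.monotone_filter_right D fun _ _ he => h he

theorem orientedLift_subset (m : Finset (Sym2 V)) : orientedLift D m ⊆ D :=
  Finset.filter_subset _ _

end DirectedEdges

namespace IsOrientation

variable {V : Type*} {G : SimpleGraph V} {D S : Finset (V × V)}

theorem ne_of_mem (hD : IsOrientation G D) {u v : V} (h : (u, v) ∈ D) : u ≠ v :=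
  (hD.1 _ h).ne

theorem swap_notMem (hD : IsOrientation G D) {u v : V} (h : (u, v) ∈ D) : (v, u) ∉ D :=
  (hD.2 u v (hD.1 _ h)).1 h

theorem bijOn_edgeSet (hD : IsOrientation G D) :
    Set.BijOn (fun e : V × V => s(e.1, e.2)) D G.edgeSet := by
  refine ⟨fun e he => hD.1 e he, fun e he e' he' h => ?_, fun e => ?_⟩
  · refine (Sym2.mk_eq_mk_iff.1 h).resolve_right ?_
    rintro rfl
    exact hD.swap_notMem he' he
  · induction e with
    | _ v w =>
      intro hvw
      by_cases h : (v, w) ∈ D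
      · exact ⟨(v, w), h, rfl⟩
      · exact ⟨(w, v), by_contra fun h' => h ((hD.2 v w hvw).2 h'), Sym2.eq_swap⟩

variable [DecidableEq V]

theorem underlyingEdges_orientedLift (hD : IsOrientation G D) {m : Finset (Sym2 V)}
    (hm : ∀ e ∈ m, e ∈ G.edgeSet) : underlyingEdges (orientedLift D m) = m := by
  ext e
  simp only [underlyingEdges, orientedLift, Finset.mem_image, Finset.mem_filter]
  constructor
  · rintro ⟨p, ⟨-, hp⟩, rfl⟩
    exact hp
  · intro he
    obtain ⟨p, hp, rfl⟩ := hD.bijOn_edgeSet.surjOn (hm e he)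
    exact ⟨p, ⟨hp, he⟩, rfl⟩

theorem orientedLift_underlyingEdges (hD : IsOrientation G D) (hS : S ⊆ D) :
    orientedLift D (underlyingEdges S) = S := by
  ext e
  simp only [underlyingEdges, orientedLift, Finset.mem_image, Finset.mem_filter]
  constructor
  · rintro ⟨he, p, hp, hpe⟩
    exact hD.bijOn_edgeSet.injOn (hS hp) he hpe ▸ hp
  · exact fun he => ⟨hS he, e, he, rfl⟩

theorem isGraphMatching_underlyingEdges_iff_disjoint (hD : IsOrientation G D) (hS : S ⊆ D) :
    IsGraphMatching G (underlyingEdges S) ↔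
      ∀ e ∈ S, ∀ e' ∈ S, ∀ v ∈ s(e.1, e.2), v ∈ s(e'.1, e'.2) → e = e' := by
  simp only [IsGraphMatching, underlyingEdges, Finset.forall_mem_image]
  constructor
  · rintro ⟨-, hdisj⟩ e he e' he' v hv hv'
    by_contra hne
    exact hdisj he he' (hD.bijOn_edgeSet.injOn.ne (hS he) (hS he') hne) v hv hv'
  · intro h
    refine ⟨fun e he => hD.1 e (hS he), fun e he e' he' hne v hv hv' => hne ?_⟩
    rw [h e he e' he' v hv hv']

theorem isGraphMatching_underlyingEdges_iff (hD : IsOrientation G D) (hS : S ⊆ D) :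
    IsGraphMatching G (underlyingEdges S) ↔ IsMultipathIn D S ∧ IsAlternating S := by
  rw [hD.isGraphMatching_underlyingEdges_iff_disjoint hS]
  constructor
  · intro hdisj
    have halt : IsAlternating S := isAlternating_iff.2 fun u v w huv hvw =>
      hD.ne_of_mem (hS huv) (congrArg Prod.fst (hdisj _ huv _ hvw v (by simp) (by simp)))
    refine ⟨⟨hS, fun v => indegIn_le_one_iff.2 fun u u' hu hu' => ?_,
      fun v => outdegIn_le_one_iff.2 fun w w' hw hw' => ?_, halt.not_hasCohCycle⟩, halt⟩
    · exact congrArg Prod.fst (hdisj _ hu _ hu' v (by simp) (by simp))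
    · exact congrArg Prod.snd (hdisj _ hw _ hw' v (by simp) (by simp))
  · rintro ⟨⟨-, hin, hout, -⟩, halt⟩ ⟨a, b⟩ he ⟨c, d⟩ he' v hv hv'
    rw [isAlternating_iff] at halt
    rcases Sym2.mem_iff.1 hv with rfl | rfl <;> rcases Sym2.mem_iff.1 hv' with rfl | rfl
    · rw [outdegIn_le_one_iff.1 (hout _) _ _ he he']
    · exact absurd he (halt _ _ _ he')
    · exact absurd he' (halt _ _ _ he)
    · rw [indegIn_le_one_iff.1 (hin _) _ _ he he']

/-- The isomorphism, induced by an orientation `D` of `G`, from the poset of matchings of `G` onto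
the subposet of alternating multipaths in the path poset of `D`. -/
def matchingOrderIso (hD : IsOrientation G D) :
    {m : Finset (Sym2 V) // IsGraphMatching G m} ≃o
      {S : Finset (V × V) // IsMultipathIn D S ∧ IsAlternating S} :=
  Equiv.toOrderIso
    { toFun m := ⟨orientedLift D m.1, by
        rw [← hD.isGraphMatching_underlyingEdges_iff (orientedLift_subset m.1),
          hD.underlyingEdges_orientedLift m.2.1]
        exact m.2⟩
      invFun S := ⟨underlyingEdges S.1,
        (hD.isGraphMatching_underlyingEdges_iff S.2.1.1).2 S.2⟩
      left_inv m := Subtype.ext (hD.underlyingEdges_orientedLift m.2.1)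
      right_inv S := Subtype.ext (hD.orientedLift_underlyingEdges S.2.1.1) }
    (fun _ _ h => orientedLift_mono h) (fun _ _ h => underlyingEdges_mono h)

theorem isAlternating_iff_forall_isMultipathIn (hD : IsOrientation G D) :
    IsAlternating D ↔ ∀ S, IsMultipathIn D S → IsAlternating S := by
  refine ⟨fun hA S hS => hA.mono hS.1, fun h => isAlternating_iff.2 fun u v w huv hvw => ?_⟩
  have huw : u ≠ w := by
    rintro rfl
    exact hD.swap_notMem huv hvw
  have hpair := isMultipathIn_pair (hD.ne_of_mem huv) (hD.ne_of_mem hvw) huw huv hvw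
  exact isAlternating_iff.1 (h _ hpair) u v w (by simp) (by simp)

end IsOrientation

theorem matchingPoset_orderIso_pathPoset_iff_general {V : Type*} [DecidableEq V]
    {G : SimpleGraph V} {D : Finset (V × V)} (hD : IsOrientation G D) :
    Nonempty ({m : Finset (Sym2 V) // IsGraphMatching G m} ≃o
        {S : Finset (V × V) // IsMultipathIn D S})
      ↔ IsAlternating D := by
  rw [hD.isAlternating_iff_forall_isMultipathIn]
  constructor
  · rintro ⟨φ⟩ S hS
    let ψ := hD.matchingOrderIso.symm.trans φ
    exact (imp_of_subtype_equiv ψ.toEquiv (fun _ hT => hT.1) hS).2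
  · intro halt
    have hset : {S | IsMultipathIn D S ∧ IsAlternating S} = {S | IsMultipathIn D S} :=
      Set.ext fun S => and_iff_left_of_imp (halt S)
    exact ⟨hD.matchingOrderIso.trans (OrderIso.setCongr _ _ hset)⟩

/-- for a finite simple graph `G` with an orientation `D = G_𝔬`, the poset
of matchings of `G` (ordered by inclusion) is order-isomorphic to the path poset of
multipaths of `G_𝔬` (ordered by inclusion) iff `𝔬` is alternating. -/
theorem matchingPoset_orderIso_pathPoset_iff {V : Type*} [Fintype V] [DecidableEq V]
    (G : SimpleGraph V) (D : Finset (V × V)) (hD : IsOrientation G D) :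
    Nonempty ({m : Finset (Sym2 V) // IsGraphMatching G m} ≃o
        {S : Finset (V × V) // IsMultipathIn D S})
      ↔ IsAlternating D :=
  matchingPoset_orderIso_pathPoset_iff_general hD
end

section
/- Let G be a finite oriented graph. The map Φ : E(G) → E(G_sr) defined by Φ(e) = ((s(e), e), t(e)) is a bijection, and a set S ⊆ E(G) is an oriented matching on G if and only if Φ(S) is a multipath of G_sr. Consequently, the poset of oriented matchings on G ordered by inclusion is order-isomorphic to the path poset P(G_sr). -/
/-!
In the source resolution `G_sr` every edge has its own source, so outdegrees are at most one, and
every edge runs from a source vertex to a target vertex, so no two edges compose and there is no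
coherent cycle. A set of edges of `G_sr` is therefore a multipath as soon as its targets are
pairwise distinct, and `Φ` preserves targets.
-/

/-- An oriented graph on vertex type `V`: a finite set of directed edges with no loops
and at most one of `(v,w)`, `(w,v)` present. -/
structure OrientedGraph (V : Type*) where
  edges : Finset (V × V)
  no_loop : ∀ e ∈ edges, e.1 ≠ e.2
  antisymm : ∀ e ∈ edges, (e.2, e.1) ∉ edges

/-- The map sending an edge `e` of `G` to the corresponding edge
`((s(e), e), t(e))` of the source resolution `G_sr`.  A vertex of `G_sr` is either a
vertex of `G` (a target, encoded as `Sum.inl`) or a pair `(s(e), e)` consisting of an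
edge of `G` and its source (such a pair being determined by `e`, it is encoded as
`Sum.inr e`). -/
def srPhi {V : Type*} (e : V × V) : (V ⊕ (V × V)) × (V ⊕ (V × V)) :=
  (Sum.inr e, Sum.inl e.2)

/-- The source resolution `G_sr` of an oriented graph `G`: its vertices are the targets
of edges of `G` (encoded as `Sum.inl w`) together with the pairs `(s(e), e)` for `e` an
edge of `G` (encoded as `Sum.inr e`), and its edges are `((s(e), e), t(e))` for `e` an
edge of `G`. -/
def srGraph {V : Type*} [DecidableEq V] (G : OrientedGraph V) :
    OrientedGraph (V ⊕ (V × V)) where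
  edges := G.edges.image srPhi
  no_loop := by
    intro p hp
    simp only [Finset.mem_image] at hp
    obtain ⟨e, -, rfl⟩ := hp
    simp [srPhi]
  antisymm := by
    intro p hp hq
    simp only [Finset.mem_image] at hp
    obtain ⟨e, -, rfl⟩ := hp
    simp only [srPhi, Finset.mem_image] at hq
    obtain ⟨e', -, h⟩ := hq
    simp [srPhi, Prod.ext_iff] at h

/-- An oriented matching on an oriented graph `G`: a set of edges of `G` whose targets
are pairwise distinct. -/
def OrientedGraph.IsOMatching {V : Type*} (G : OrientedGraph V)
    (S : Finset (V × V)) : Prop :=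
  S ⊆ G.edges ∧ ∀ e ∈ S, ∀ e' ∈ S, e ≠ e' → e.2 ≠ e'.2

theorem forall_card_filter_eq_le_one_iff_injOn {α β : Type*} [DecidableEq β] {s : Finset α}
    {f : α → β} : (∀ b, (s.filter fun a => f a = b).card ≤ 1) ↔ Set.InjOn f s := by
  simp only [Finset.card_le_one, Finset.mem_filter]
  constructor
  · intro h a ha a' ha' haa'
    exact h (f a') a ⟨ha, haa'⟩ a' ⟨ha', rfl⟩
  · rintro h b a ⟨ha, hab⟩ a' ⟨ha', hab'⟩
    exact h ha ha' (hab.trans hab'.symm)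

theorem not_hasCohCycle_of_snd_ne_fst {V : Type*} {S : Finset (V × V)}
    (hS : ∀ e ∈ S, ∀ e' ∈ S, e.2 ≠ e'.1) : ¬ HasCohCycle S := by
  rintro ⟨_, f, -, hmem, hcomp⟩
  exact hS _ (hmem 0) _ (hmem (0 + 1)) (hcomp 0)

theorem OrientedGraph.isOMatching_iff_injOn_snd {V : Type*} {G : OrientedGraph V}
    {S : Finset (V × V)} : G.IsOMatching S ↔ S ⊆ G.edges ∧ Set.InjOn Prod.snd (S : Set (V × V)) :=
  and_congr_right fun _ => forall₂_congr fun _ _ => forall₂_congr fun _ _ => not_imp_not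

theorem srPhi_injective {V : Type*} : Function.Injective (srPhi (V := V)) :=
  fun _ _ h => Sum.inr_injective (congrArg Prod.fst h)

section

variable {V : Type*} [DecidableEq V]

theorem isMultipathIn_iff_injOn_snd {D S : Finset (V × V)}
    (hsource : Set.InjOn Prod.fst (D : Set (V × V)))
    (hcomp : ∀ e ∈ D, ∀ e' ∈ D, e.2 ≠ e'.1) :
    IsMultipathIn D S ↔ S ⊆ D ∧ Set.InjOn Prod.snd (S : Set (V × V)) := by
  refine and_congr_right fun hSD => ?_
  have hout : ∀ v, outdegIn S v ≤ 1 :=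
    forall_card_filter_eq_le_one_iff_injOn.2 (hsource.mono (Finset.coe_subset.2 hSD))
  have hcycle : ¬ HasCohCycle S :=
    not_hasCohCycle_of_snd_ne_fst fun e he e' he' => hcomp e (hSD he) e' (hSD he')
  exact (and_iff_left ⟨hout, hcycle⟩).trans forall_card_filter_eq_le_one_iff_injOn

theorem injOn_snd_image_srPhi_iff {S : Finset (V × V)} :
    Set.InjOn Prod.snd (S.image srPhi : Set ((V ⊕ V × V) × (V ⊕ V × V))) ↔
      Set.InjOn Prod.snd (S : Set (V × V)) := by
  have htarget : Prod.snd ∘ srPhi = Sum.inl ∘ (Prod.snd : V × V → V) := rfl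
  rw [Finset.coe_image, ← srPhi_injective.injOn.comp_iff, htarget]
  exact ⟨Set.InjOn.of_comp, Sum.inl_injective.comp_injOn⟩

variable (G : OrientedGraph V)

theorem coe_edges_srGraph : ((srGraph G).edges : Set _) = srPhi '' (G.edges : Set (V × V)) :=
  Finset.coe_image

theorem injOn_fst_edges_srGraph :
    Set.InjOn Prod.fst ((srGraph G).edges : Set ((V ⊕ V × V) × (V ⊕ V × V))) := by
  rw [coe_edges_srGraph]
  exact Set.InjOn.image_of_comp (f := srPhi) Sum.inr_injective.injOn

theorem snd_ne_fst_of_mem_edges_srGraph :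
    ∀ e ∈ (srGraph G).edges, ∀ e' ∈ (srGraph G).edges, e.2 ≠ e'.1 :=
  Finset.forall_mem_image.2 fun _ _ => Finset.forall_mem_image.2 fun _ _ => Sum.inl_ne_inr

theorem isOMatching_iff_isMultipathIn_image_srPhi {S : Finset (V × V)} :
    G.IsOMatching S ↔ IsMultipathIn (srGraph G).edges (S.image srPhi) := by
  have hsub : S.image srPhi ⊆ (srGraph G).edges ↔ S ⊆ G.edges :=
    Finset.image_subset_image_iff srPhi_injective
  rw [OrientedGraph.isOMatching_iff_injOn_snd,
    isMultipathIn_iff_injOn_snd (injOn_fst_edges_srGraph G) (snd_ne_fst_of_mem_edges_srGraph G),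
    hsub, injOn_snd_image_srPhi_iff]

/-- The isomorphism `S ↦ Φ(S)` from the poset of oriented matchings on `G` to the path poset of
its source resolution. -/
noncomputable def oMatchingOrderIsoMultipath :
    {S : Finset (V × V) // G.IsOMatching S} ≃o
      {T : Finset ((V ⊕ (V × V)) × (V ⊕ (V × V))) // IsMultipathIn (srGraph G).edges T} :=
  RelIso.ofSurjective
    (OrderEmbedding.ofMapLEIff
      (Subtype.map (Finset.image srPhi) fun _ => (isOMatching_iff_isMultipathIn_image_srPhi G).1)
      fun _ _ => Finset.image_subset_image_iff srPhi_injective)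
    (by
      rintro ⟨T, hT⟩
      obtain ⟨S, -, rfl⟩ := Finset.subset_image_iff.1 hT.1
      exact ⟨⟨S, (isOMatching_iff_isMultipathIn_image_srPhi G).2 hT⟩, rfl⟩)

end

/-- the map `Φ : e ↦ ((s(e), e), t(e))` is a bijection from the edges of a
finite oriented graph `G` onto the edges of its source resolution `G_sr`; a set
`S ⊆ E(G)` is an oriented matching on `G` iff `Φ(S)` is a multipath of `G_sr`; and
consequently the poset of oriented matchings on `G` (ordered by inclusion) is
order-isomorphic to the path poset `P(G_sr)`. -/
theorem oMatchingPoset_orderIso_pathPoset_srGraph {V : Type*} [DecidableEq V]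
    (G : OrientedGraph V) :
    Set.BijOn srPhi (↑G.edges : Set (V × V))
        (↑(srGraph G).edges : Set ((V ⊕ (V × V)) × (V ⊕ (V × V))))
      ∧ (∀ S : Finset (V × V), S ⊆ G.edges →
          (G.IsOMatching S ↔ IsMultipathIn (srGraph G).edges (S.image srPhi)))
      ∧ Nonempty ({S : Finset (V × V) // G.IsOMatching S} ≃o
          {T : Finset ((V ⊕ (V × V)) × (V ⊕ (V × V))) //
            IsMultipathIn (srGraph G).edges T}) := by
  refine ⟨?_, fun S _ => isOMatching_iff_isMultipathIn_image_srPhi G,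
    ⟨oMatchingOrderIsoMultipath G⟩⟩
  rw [coe_edges_srGraph]
  exact srPhi_injective.injOn.bijOn_image
end
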